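/- Let α, β, ε be nonnegative real numbers with α·ε < 1. Then the series ∑_{i=1}^{∞} ( β · α^{2^{i-1}-1} · ε^{2^{i-1}} + α^{2^i - 1} · ε^{2^i} ) converges, and ε + ∑_{i=1}^{∞} ( β · α^{2^{i-1}-1} · ε^{2^{i-1}} + α^{2^i - 1} · ε^{2^i} ) = ε (1 + β) · ∑_{i=0}^{∞} (αε)^{2^i − 1} ≤ ε (1 + β) / (1 − αε). -/

import Mathlib

/-!
With `x = α * ε`, each term of the series is `β * ε * x ^ (2 ^ i - 1) + ε * x ^ (2 ^ (i + 1) - 1)`,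
so everything reduces to the lacunary subseries `S x = ∑ x ^ (2 ^ i - 1)` of the geometric series.
For `0 ≤ x` the bound `S x ≤ (1 - x)⁻¹` is the comparison of a subseries with the whole series. For
`x ≤ 0` the functional equation `S x = 1 + x * S (x ^ 2)` and `1 ≤ S (x ^ 2)` yield
`S x ≤ 1 + x ≤ (1 - x)⁻¹`.
-/

theorem pow_sub_one_mul_pow_eq_mul_mul_pow {M : Type*} [CommMonoid M] (a b : M) {n : ℕ}
    (hn : n ≠ 0) : a ^ (n - 1) * b ^ n = b * (a * b) ^ (n - 1) := by
  rw [← mul_pow_sub_one hn b, mul_left_comm, ← mul_pow]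

theorem two_pow_sub_one_injective : Function.Injective fun i : ℕ ↦ 2 ^ i - 1 := fun _ _ hij ↦
  Nat.pow_right_injective le_rfl (Nat.sub_one_cancel (by positivity) (by positivity) hij)

section NormedRing

variable {R : Type*} [NormedRing R] [CompleteSpace R] {x : R}

theorem summable_pow_two_pow_sub_one (hx : ‖x‖ < 1) :
    Summable fun i : ℕ ↦ x ^ (2 ^ i - 1) :=
  (summable_geometric_of_norm_lt_one hx).comp_injective two_pow_sub_one_injective

theorem tsum_pow_two_pow_sub_one_eq_one_add (hx : ‖x‖ < 1) :
    ∑' i : ℕ, x ^ (2 ^ i - 1) = 1 + ∑' i : ℕ, x ^ (2 ^ (i + 1) - 1) := by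
  simpa only [pow_zero, Nat.sub_self] using (summable_pow_two_pow_sub_one hx).tsum_eq_zero_add

theorem tsum_pow_two_pow_sub_one_eq_one_add_mul (hx : ‖x‖ < 1) :
    ∑' i : ℕ, x ^ (2 ^ i - 1) = 1 + x * ∑' i : ℕ, (x ^ 2) ^ (2 ^ i - 1) := by
  have exponent_succ (i : ℕ) : 2 ^ (i + 1) - 1 = 2 * (2 ^ i - 1) + 1 := by
    have := Nat.one_le_two_pow (n := i)
    omega
  have hx_sq : ‖x ^ 2‖ < 1 :=
    (norm_pow_le' x two_pos).trans_lt (pow_lt_one₀ (norm_nonneg x) hx two_ne_zero)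
  rw [tsum_pow_two_pow_sub_one_eq_one_add hx,
    ← (summable_pow_two_pow_sub_one hx_sq).tsum_mul_left]
  simp only [exponent_succ, pow_succ' x (2 * _), pow_mul]

end NormedRing

theorem hasSum_mul_pow_two_pow_add_pow_two_pow_succ {R : Type*} [NormedCommRing R]
    [CompleteSpace R] (a b e : R) (h : ‖a * e‖ < 1) :
    HasSum
      (fun i : ℕ ↦ b * a ^ (2 ^ i - 1) * e ^ 2 ^ i + a ^ (2 ^ (i + 1) - 1) * e ^ 2 ^ (i + 1))
      (e * (1 + b) * ∑' i : ℕ, (a * e) ^ (2 ^ i - 1) - e) := by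
  have hS := summable_pow_two_pow_sub_one h
  have hS_succ : Summable fun i : ℕ ↦ (a * e) ^ (2 ^ (i + 1) - 1) :=
    hS.comp_injective (add_left_injective 1)
  have hterm (i : ℕ) : a ^ (2 ^ i - 1) * e ^ 2 ^ i = e * (a * e) ^ (2 ^ i - 1) :=
    pow_sub_one_mul_pow_eq_mul_mul_pow a e (by positivity)
  have hvalue : e * (1 + b) * ∑' i : ℕ, (a * e) ^ (2 ^ i - 1) - e =
      b * (e * ∑' i : ℕ, (a * e) ^ (2 ^ i - 1)) +
        e * ∑' i : ℕ, (a * e) ^ (2 ^ (i + 1) - 1) := by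
    linear_combination e * tsum_pow_two_pow_sub_one_eq_one_add h
  simp only [mul_assoc b, hterm, hvalue]
  exact ((hS.hasSum.mul_left e).mul_left b).add (hS_succ.hasSum.mul_left e)

section Real

variable {x : ℝ}

theorem tsum_pow_two_pow_sub_one_le_of_nonneg (hx₀ : 0 ≤ x) (hx₁ : x < 1) :
    ∑' i : ℕ, x ^ (2 ^ i - 1) ≤ (1 - x)⁻¹ := by
  rw [← tsum_geometric_of_lt_one hx₀ hx₁]
  exact tsum_comp_le_tsum_of_inj (summable_geometric_of_lt_one hx₀ hx₁)
    (fun n ↦ pow_nonneg hx₀ n) two_pow_sub_one_injective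

theorem one_le_tsum_pow_two_pow_sub_one (hx₀ : 0 ≤ x) (hx₁ : x < 1) :
    1 ≤ ∑' i : ℕ, x ^ (2 ^ i - 1) := by
  rw [tsum_pow_two_pow_sub_one_eq_one_add (by rwa [Real.norm_of_nonneg hx₀])]
  exact le_add_of_nonneg_right (tsum_nonneg fun _ ↦ pow_nonneg hx₀ _)

theorem tsum_pow_two_pow_sub_one_le_one_add (hx₀ : x ≤ 0) (hx₁ : -1 < x) :
    ∑' i : ℕ, x ^ (2 ^ i - 1) ≤ 1 + x := by
  have hsq : 1 ≤ ∑' i : ℕ, (x ^ 2) ^ (2 ^ i - 1) :=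
    one_le_tsum_pow_two_pow_sub_one (sq_nonneg x) (by nlinarith)
  rw [tsum_pow_two_pow_sub_one_eq_one_add_mul (abs_lt.2 ⟨hx₁, by linarith⟩)]
  exact add_le_add_right (mul_le_of_one_le_right hx₀ hsq) 1

theorem tsum_pow_two_pow_sub_one_le (hx : |x| < 1) :
    ∑' i : ℕ, x ^ (2 ^ i - 1) ≤ (1 - x)⁻¹ := by
  obtain ⟨hx_gt, hx_lt⟩ := abs_lt.1 hx
  obtain hx₀ | hx₀ := le_total 0 x
  · exact tsum_pow_two_pow_sub_one_le_of_nonneg hx₀ hx_lt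
  · calc
      ∑' i : ℕ, x ^ (2 ^ i - 1) ≤ 1 + x := tsum_pow_two_pow_sub_one_le_one_add hx₀ hx_gt
      _ ≤ (1 - x)⁻¹ := by
        rw [← one_div, le_div_iff₀ (sub_pos.2 hx_lt)]
        nlinarith [sq_nonneg x]

end Real

theorem statement9_general (α β ε : ℝ) (h : |α * ε| < 1) (hεβ : 0 ≤ ε * (1 + β)) :
    Summable (fun i : ℕ =>
        β * α ^ (2 ^ i - 1) * ε ^ 2 ^ i + α ^ (2 ^ (i + 1) - 1) * ε ^ 2 ^ (i + 1)) ∧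
      ε + (∑' i : ℕ,
          (β * α ^ (2 ^ i - 1) * ε ^ 2 ^ i + α ^ (2 ^ (i + 1) - 1) * ε ^ 2 ^ (i + 1))) =
        ε * (1 + β) * ∑' i : ℕ, (α * ε) ^ (2 ^ i - 1) ∧
      ε * (1 + β) * (∑' i : ℕ, (α * ε) ^ (2 ^ i - 1)) ≤ ε * (1 + β) / (1 - α * ε) := by
  have hsum := hasSum_mul_pow_two_pow_add_pow_two_pow_succ α β ε h
  refine ⟨hsum.summable, ?_, ?_⟩
  · rw [hsum.tsum_eq, add_sub_cancel]
  · rw [div_eq_mul_inv]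
    exact mul_le_mul_of_nonneg_left (tsum_pow_two_pow_sub_one_le h) hεβ

/- The series `∑_{i=1}^∞ (β α^{2^{i-1}-1} ε^{2^{i-1}} + α^{2^i-1} ε^{2^i})` is
reindexed over `i : ℕ` (starting at 0) via `i ↦ i + 1`. -/
theorem statement9 (α β ε : ℝ) (hα : 0 ≤ α) (hβ : 0 ≤ β) (hε : 0 ≤ ε)
    (h : α * ε < 1) :
    Summable (fun i : ℕ =>
        β * α ^ (2 ^ i - 1) * ε ^ 2 ^ i + α ^ (2 ^ (i + 1) - 1) * ε ^ 2 ^ (i + 1)) ∧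
      ε + (∑' i : ℕ,
          (β * α ^ (2 ^ i - 1) * ε ^ 2 ^ i + α ^ (2 ^ (i + 1) - 1) * ε ^ 2 ^ (i + 1))) =
        ε * (1 + β) * ∑' i : ℕ, (α * ε) ^ (2 ^ i - 1) ∧
      ε * (1 + β) * (∑' i : ℕ, (α * ε) ^ (2 ^ i - 1)) ≤ ε * (1 + β) / (1 - α * ε) :=
  statement9_general α β ε (by rwa [abs_of_nonneg (mul_nonneg hα hε)]) (by positivity)
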